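/- Let B, C > 0 and A = B²/(27C), and define the bulk potential f_B(Q) = (A/2) tr(Q²) − (B/3) tr(Q³) + (C/4) (tr Q²)² on S₀. Then f_B(Q) ≥ 0 for every Q ∈ S₀, and f_B(Q) = 0 if and only if Q = 0 or Q = (B/(3C))( n ⊗ n − I/3 ) for some unit vector n ∈ ℝ³. -/

import Mathlib

/-!
Put `s = B / (3C)`, so that `B = 3Cs` and `A = Cs²/3`. A symmetric traceless `Q` is orthogonally
diagonalizable, and `f_B` depends only on its eigenvalues `x, y, z`, where `x + y + z = 0`. Ordering
them so that `z ≥ 0` and writing `p = (x - y)²`, one has the identity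
`16 f_B / C = z² (3z - 2s)² + p (4s²/3 + 12sz + 6z²) + p²`,
whose terms are all nonnegative (`eigenvalue_identity`). It vanishes only if `x = y`, and `z = 0` or
`z = 2s/3`: the eigenvalues are all zero or are `(2s/3, -s/3, -s/3)`. In the second case the spectral
decomposition reads `Q = s (n ⊗ n - I/3)`, with `n` the unit eigenvector of the simple eigenvalue.
-/

noncomputable section

open Matrix

/-- The Landau–de Gennes bulk potential at temperature `A`:
`f_B(Q) = (A/2) tr Q² − (B/3) tr Q³ + (C/4) (tr Q²)²`. -/
def fB (A B C : ℝ) (Q : Matrix (Fin 3) (Fin 3) ℝ) : ℝ :=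
  (A / 2) * Matrix.trace (Q * Q) - (B / 3) * Matrix.trace (Q * Q * Q)
    + (C / 4) * (Matrix.trace (Q * Q)) ^ 2

/-- `f_B / C` at a matrix with eigenvalues `x, y, z`, in terms of `s = B / (3C)`. -/
def bulkEig (s x y z : ℝ) : ℝ :=
  s ^ 2 / 6 * (x ^ 2 + y ^ 2 + z ^ 2) - s * (x ^ 3 + y ^ 3 + z ^ 3)
    + (x ^ 2 + y ^ 2 + z ^ 2) ^ 2 / 4

lemma eigenvalue_identity (s x y z : ℝ) (h : x + y + z = 0) :
    16 * bulkEig s x y z = z ^ 2 * (3 * z - 2 * s) ^ 2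
      + (x - y) ^ 2 * (4 / 3 * s ^ 2 + 12 * s * z + 6 * z ^ 2) + ((x - y) ^ 2) ^ 2 := by
  obtain rfl : z = -x - y := by linarith
  unfold bulkEig
  ring

lemma bulkEig_of_nonneg (s x y z : ℝ) (hs : 0 < s) (h : x + y + z = 0) (hz : 0 ≤ z) :
    0 ≤ bulkEig s x y z ∧ (bulkEig s x y z = 0 →
      (x = 0 ∧ y = 0 ∧ z = 0) ∨ (x = -s / 3 ∧ y = -s / 3 ∧ z = 2 * s / 3)) := by
  have key := eigenvalue_identity s x y z h
  have h1 : 0 ≤ z ^ 2 * (3 * z - 2 * s) ^ 2 := by positivity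
  have h2 : 0 ≤ (x - y) ^ 2 * (4 / 3 * s ^ 2 + 12 * s * z + 6 * z ^ 2) := by positivity
  have h3 : 0 ≤ ((x - y) ^ 2) ^ 2 := by positivity
  refine ⟨by linarith, fun h0 => ?_⟩
  have e3 : ((x - y) ^ 2) ^ 2 = 0 := by linarith
  have e1 : z ^ 2 * (3 * z - 2 * s) ^ 2 = 0 := by linarith
  have hxy : x - y = 0 := by simpa using e3
  rcases mul_eq_zero.mp e1 with e | e
  · have : z = 0 := by simpa using e
    left
    refine ⟨?_, ?_, ?_⟩ <;> linarith
  · have : 3 * z - 2 * s = 0 := by simpa using e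
    right
    refine ⟨?_, ?_, ?_⟩ <;> linarith

/-- The potential as a function of the unordered eigenvalues: one of them is nonnegative because
their sum is zero, so `bulkEig_of_nonneg` applies after a permutation. -/
lemma bulkEig_spec (s : ℝ) (hs : 0 < s) (l : Fin 3 → ℝ) (h : l 0 + l 1 + l 2 = 0) :
    0 ≤ bulkEig s (l 0) (l 1) (l 2) ∧ (bulkEig s (l 0) (l 1) (l 2) = 0 →
      l = 0 ∨ ∃ k, l = fun j => s * ((if j = k then 1 else 0) - 1 / 3)) := by
  have fin (k : Fin 3) (g : l 0 = s * ((if 0 = k then 1 else 0) - 1 / 3) ∧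
      l 1 = s * ((if 1 = k then 1 else 0) - 1 / 3) ∧
      l 2 = s * ((if 2 = k then 1 else 0) - 1 / 3)) :
      ∃ k, l = fun j => s * ((if j = k then 1 else 0) - 1 / 3) := by
    refine ⟨k, funext fun j => ?_⟩
    obtain ⟨g0, g1, g2⟩ := g
    fin_cases j
    exacts [g0, g1, g2]
  have zer (g : l 0 = 0 ∧ l 1 = 0 ∧ l 2 = 0) : l = 0 := by
    obtain ⟨g0, g1, g2⟩ := g
    funext j
    fin_cases j
    exacts [g0, g1, g2]
  by_cases c2 : 0 ≤ l 2
  · obtain ⟨p, q⟩ := bulkEig_of_nonneg s _ _ _ hs h c2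
    refine ⟨p, fun e => ?_⟩
    rcases q e with ⟨a, b, c⟩ | ⟨a, b, c⟩
    · exact .inl (zer ⟨a, b, c⟩)
    · refine .inr (fin 2 ?_)
      rw [a, b, c]
      simp only [Fin.isValue, Fin.reduceEq, reduceIte]
      refine ⟨?_, ?_, ?_⟩ <;> ring
  by_cases c1 : 0 ≤ l 1
  · obtain ⟨p, q⟩ := bulkEig_of_nonneg s (l 0) (l 2) (l 1) hs (by linarith) c1
    have sw : bulkEig s (l 0) (l 1) (l 2) = bulkEig s (l 0) (l 2) (l 1) := by
      unfold bulkEig; ring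
    rw [sw]
    refine ⟨p, fun e => ?_⟩
    rcases q e with ⟨a, b, c⟩ | ⟨a, b, c⟩
    · exact .inl (zer ⟨a, c, b⟩)
    · refine .inr (fin 1 ?_)
      rw [a, b, c]
      simp only [Fin.isValue, Fin.reduceEq, reduceIte]
      refine ⟨?_, ?_, ?_⟩ <;> ring
  · obtain ⟨p, q⟩ := bulkEig_of_nonneg s (l 1) (l 2) (l 0) hs (by linarith) (by linarith)
    have sw : bulkEig s (l 0) (l 1) (l 2) = bulkEig s (l 1) (l 2) (l 0) := by
      unfold bulkEig; ring
    rw [sw]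
    refine ⟨p, fun e => ?_⟩
    rcases q e with ⟨a, b, c⟩ | ⟨a, b, c⟩
    · exact .inl (zer ⟨c, a, b⟩)
    · refine .inr (fin 0 ?_)
      rw [a, b, c]
      simp only [Fin.isValue, Fin.reduceEq, reduceIte]
      refine ⟨?_, ?_, ?_⟩ <;> ring

lemma exists_orthogonal_diagonalization (Q : Matrix (Fin 3) (Fin 3) ℝ) (hQ : Qᵀ = Q) :
    ∃ (U : Matrix (Fin 3) (Fin 3) ℝ) (l : Fin 3 → ℝ),
      Uᵀ * U = 1 ∧ U * Uᵀ = 1 ∧ Q = U * diagonal l * Uᵀ := by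
  have hH : Q.IsHermitian := by simpa [Matrix.IsHermitian, conjTranspose_eq_transpose_of_trivial]
  refine ⟨hH.eigenvectorUnitary, hH.eigenvalues, ?_, ?_, ?_⟩
  · simpa [star_eq_conjTranspose, conjTranspose_eq_transpose_of_trivial] using
      Unitary.coe_star_mul_self hH.eigenvectorUnitary
  · simpa [star_eq_conjTranspose, conjTranspose_eq_transpose_of_trivial] using
      Unitary.coe_mul_star_self hH.eigenvectorUnitary
  · simpa [Unitary.conjStarAlgAut_apply, star_eq_conjTranspose,
      conjTranspose_eq_transpose_of_trivial, Function.comp_def] using hH.spectral_theorem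

/-- Conjugating by an orthogonal matrix does not change the trace. -/
lemma trace_conj (U D : Matrix (Fin 3) (Fin 3) ℝ) (hU : Uᵀ * U = 1) :
    trace (U * D * Uᵀ) = trace D := by
  rw [trace_mul_comm, ← Matrix.mul_assoc, hU, Matrix.one_mul]

lemma conj_mul_conj (U D E : Matrix (Fin 3) (Fin 3) ℝ) (hU : Uᵀ * U = 1) :
    (U * D * Uᵀ) * (U * E * Uᵀ) = U * (D * E) * Uᵀ := by
  calc _ = U * D * (Uᵀ * U) * E * Uᵀ := by simp only [Matrix.mul_assoc]
    _ = _ := by rw [hU]; simp only [Matrix.mul_assoc, Matrix.one_mul]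

lemma fB_conj_diagonal (B C : ℝ) (hC : 0 < C) (U : Matrix (Fin 3) (Fin 3) ℝ) (l : Fin 3 → ℝ)
    (hU : Uᵀ * U = 1) :
    fB (B ^ 2 / (27 * C)) B C (U * diagonal l * Uᵀ)
      = C * bulkEig (B / (3 * C)) (l 0) (l 1) (l 2) := by
  unfold fB bulkEig
  rw [conj_mul_conj _ _ _ hU, conj_mul_conj _ _ _ hU, trace_conj _ _ hU, trace_conj _ _ hU]
  simp only [diagonal_mul_diagonal, trace_diagonal, Fin.sum_univ_three]
  field_simp
  ring

lemma fB_uniaxial (B C : ℝ) (hC : 0 < C) (n : Fin 3 → ℝ) (hn : ∑ i, n i ^ 2 = 1) :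
    fB (B ^ 2 / (27 * C)) B C ((B / (3 * C)) •
      (vecMulVec n n - (1 / 3 : ℝ) • (1 : Matrix (Fin 3) (Fin 3) ℝ))) = 0 := by
  have hd : n ⬝ᵥ n = 1 := by
    rw [← hn]; simp [dotProduct, sq]
  have hP : vecMulVec n n * vecMulVec n n = vecMulVec n n := by
    rw [vecMulVec_mul_vecMulVec, hd]; simp
  have ht : trace (vecMulVec n n) = 1 := by rw [trace_vecMulVec, hd]
  unfold fB
  simp only [smul_mul_assoc, mul_smul_comm, sub_mul, mul_sub, hP, Matrix.one_mul,
    Matrix.mul_one, trace_smul, trace_sub, ht, trace_one, Fintype.card_fin, smul_eq_mul]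
  field_simp
  norm_num

/-- at the nematic–isotropic transition temperature
`A = B²/(27C)`, the bulk potential is nonnegative on `S₀` and vanishes exactly
at the isotropic state `Q = 0` and at the uniaxial states
`Q = (B/(3C))(n ⊗ n − I/3)` with `n` a unit vector. -/
theorem bulk_potential_nonneg_and_minimizers
    (B C : ℝ) (hB : 0 < B) (hC : 0 < C) :
    ∀ Q : Matrix (Fin 3) (Fin 3) ℝ, Qᵀ = Q → Matrix.trace Q = 0 →
      0 ≤ fB (B ^ 2 / (27 * C)) B C Q ∧
      (fB (B ^ 2 / (27 * C)) B C Q = 0 ↔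
        Q = 0 ∨ ∃ n : Fin 3 → ℝ, (∑ i, n i ^ 2 = 1) ∧
          Q = (B / (3 * C)) •
            (vecMulVec n n - (1 / 3 : ℝ) • (1 : Matrix (Fin 3) (Fin 3) ℝ))) := by
  intro Q hQ htr
  have hs : 0 < B / (3 * C) := by positivity
  obtain ⟨U, l, hU, hU', rfl⟩ := exists_orthogonal_diagonalization Q hQ
  have hl : l 0 + l 1 + l 2 = 0 := by
    rw [trace_conj _ _ hU, trace_diagonal, Fin.sum_univ_three] at htr
    exact htr
  obtain ⟨hnn, hzero⟩ := bulkEig_spec _ hs l hl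
  refine ⟨by rw [fB_conj_diagonal B C hC U l hU]; positivity, fun h0 => ?_, ?_⟩
  · rw [fB_conj_diagonal B C hC U l hU] at h0
    rcases hzero ((mul_eq_zero.mp h0).resolve_left hC.ne') with rfl | ⟨k, rfl⟩
    · left
      simp
    · right
      -- The director is the unit eigenvector of the simple eigenvalue, the `k`-th column of `U`.
      refine ⟨fun i => U i k, ?_, ?_⟩
      · have := congrFun (congrFun hU k) k
        simpa [Matrix.mul_apply, sq] using this
      · ext i j
        have := congrFun (congrFun hU' i) j
        simp only [Matrix.mul_apply, transpose_apply] at this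
        simp only [Matrix.mul_apply, transpose_apply, Matrix.smul_apply,
          Matrix.sub_apply,
          vecMulVec_apply, smul_eq_mul, ← this]
        simp only [Fin.sum_univ_three]
        fin_cases k <;> simp <;> ring
  · rintro (h | ⟨n, hn, h⟩)
    · rw [h]
      simp [fB]
    · rw [h]
      exact fB_uniaxial B C hC n hn
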